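/- arXiv:1005.4854 — 5 statements merged into one kernel-verified Lean document; each statement's English description precedes it below -/
import Mathlib

section
/- Let P₁, Q₁ ∈ ℂ^{n₁×n₁} and P₂, Q₂ ∈ ℂ^{n₂×n₂} be nonzero Hermitian idempotent matrices. If P₁ ⊗ P₂ = Q₁ ⊗ Q₂ (Kronecker product), then P₁ = Q₁ and P₂ = Q₂. -/
/-!
Comparing entries at a nonzero entry of `P₂` shows `P₁ = c • Q₁` for some scalar `c`. Idempotency
turns this into `c ^ 2 • Q₁ = c • Q₁`, and `c ≠ 0`, `Q₁ ≠ 0` force `c = 1`. Once `P₁ = Q₁`, a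
nonzero entry of `P₁` can be cancelled to get `P₂ = Q₂`.
-/


open Matrix Kronecker

theorem stmt_1 {n₁ n₂ : ℕ}
    (P₁ Q₁ : Matrix (Fin n₁) (Fin n₁) ℂ) (P₂ Q₂ : Matrix (Fin n₂) (Fin n₂) ℂ)
    (hP₁h : P₁ᴴ = P₁) (hP₁i : P₁ * P₁ = P₁) (hP₁0 : P₁ ≠ 0)
    (hQ₁h : Q₁ᴴ = Q₁) (hQ₁i : Q₁ * Q₁ = Q₁) (hQ₁0 : Q₁ ≠ 0)
    (hP₂h : P₂ᴴ = P₂) (hP₂i : P₂ * P₂ = P₂) (hP₂0 : P₂ ≠ 0)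
    (hQ₂h : Q₂ᴴ = Q₂) (hQ₂i : Q₂ * Q₂ = Q₂) (hQ₂0 : Q₂ ≠ 0)
    (h : P₁ ⊗ₖ P₂ = Q₁ ⊗ₖ Q₂) :
    P₁ = Q₁ ∧ P₂ = Q₂ := by
  obtain ⟨a, b, hab⟩ : ∃ a b, P₂ a b ≠ 0 := by
    by_contra! hz
    exact hP₂0 (Matrix.ext hz)
  obtain ⟨i₀, j₀, hij⟩ : ∃ i j, P₁ i j ≠ 0 := by
    by_contra! hz
    exact hP₁0 (Matrix.ext hz)
  have hent : ∀ i j k l, P₁ i j * P₂ k l = Q₁ i j * Q₂ k l := fun i j k l =>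
    congrFun (congrFun h (i, k)) (j, l)
  obtain ⟨c, hc⟩ : ∃ c : ℂ, P₁ = c • Q₁ := by
    refine ⟨Q₂ a b / P₂ a b, Matrix.ext fun i j => ?_⟩
    rw [Matrix.smul_apply, smul_eq_mul, div_mul_eq_mul_div, eq_div_iff hab, hent, mul_comm]
  have hc0 : c ≠ 0 := by
    rintro rfl
    exact hP₁0 (by rw [hc, zero_smul])
  have hcc : (c * c) • Q₁ = c • Q₁ := by
    have h2 := hP₁i
    rwa [hc, Matrix.smul_mul, Matrix.mul_smul, hQ₁i, smul_smul] at h2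
  have hc1 : c = 1 := mul_left_cancel₀ hc0 (by simpa using smul_left_injective ℂ hQ₁0 hcc)
  have h1 : P₁ = Q₁ := by rw [hc, hc1, one_smul]
  refine ⟨h1, Matrix.ext fun k l => mul_left_cancel₀ hij ?_⟩
  rw [hent, h1]
end

section
/- Let P₁ ∈ ℂ^{n₁×n₁} and P₂ ∈ ℂ^{n₂×n₂} be Hermitian projectors with tr(P₁) = m₁ and tr(P₂) = m₂, and let Ω₁, Ω₁′ ∈ ℂ^{n₁×n₁} and Ω₂, Ω₂′ ∈ ℂ^{n₂×n₂} be skew-Hermitian matrices. Set ξⱼ := [Pⱼ, Ωⱼ] and ηⱼ := [Pⱼ, Ωⱼ′] for j = 1, 2. Then tr( (ξ₁ ⊗ P₂ + P₁ ⊗ ξ₂) · (η₁ ⊗ P₂ + P₁ ⊗ η₂) ) = m₂ · tr(ξ₁η₁) + m₁ · tr(ξ₂η₂). -/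
/-!
Expand the product with the mixed-product rule `(A ⊗ B) * (C ⊗ D) = AC ⊗ BD` and
`tr (A ⊗ B) = tr A * tr B`. Since `Pⱼ` is idempotent, the diagonal terms are
`tr (ξ₁η₁) * tr P₂` and `tr P₁ * tr (ξ₂η₂)`. Each cross term has a factor `tr (P₁ * η₁)` or
`tr (P₂ * η₂)`, which vanishes because `P` is trace-orthogonal to every commutator `[P, Ω]`
by cyclicity of the trace.
-/

open Matrix Kronecker

theorem trace_mul_commutator {n : ℕ} (P Ω : Matrix (Fin n) (Fin n) ℂ) :
    (P * (P * Ω - Ω * P)).trace = 0 := by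
  rw [mul_sub, trace_sub, ← mul_assoc P Ω P, trace_mul_comm (P * Ω) P, sub_self]

theorem stmt_2 {n₁ n₂ : ℕ} (m₁ m₂ : ℕ)
    (P₁ : Matrix (Fin n₁) (Fin n₁) ℂ) (P₂ : Matrix (Fin n₂) (Fin n₂) ℂ)
    (hP₁h : P₁ᴴ = P₁) (hP₁i : P₁ * P₁ = P₁) (hP₁tr : P₁.trace = (m₁ : ℂ))
    (hP₂h : P₂ᴴ = P₂) (hP₂i : P₂ * P₂ = P₂) (hP₂tr : P₂.trace = (m₂ : ℂ))
    (Ω₁ Ω₁' : Matrix (Fin n₁) (Fin n₁) ℂ) (Ω₂ Ω₂' : Matrix (Fin n₂) (Fin n₂) ℂ)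
    (hΩ₁ : Ω₁ᴴ = -Ω₁) (hΩ₁' : Ω₁'ᴴ = -Ω₁')
    (hΩ₂ : Ω₂ᴴ = -Ω₂) (hΩ₂' : Ω₂'ᴴ = -Ω₂')
    (ξ₁ : Matrix (Fin n₁) (Fin n₁) ℂ) (hξ₁ : ξ₁ = P₁ * Ω₁ - Ω₁ * P₁)
    (η₁ : Matrix (Fin n₁) (Fin n₁) ℂ) (hη₁ : η₁ = P₁ * Ω₁' - Ω₁' * P₁)
    (ξ₂ : Matrix (Fin n₂) (Fin n₂) ℂ) (hξ₂ : ξ₂ = P₂ * Ω₂ - Ω₂ * P₂)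
    (η₂ : Matrix (Fin n₂) (Fin n₂) ℂ) (hη₂ : η₂ = P₂ * Ω₂' - Ω₂' * P₂) :
    ((ξ₁ ⊗ₖ P₂ + P₁ ⊗ₖ ξ₂) * (η₁ ⊗ₖ P₂ + P₁ ⊗ₖ η₂)).trace
      = (m₂ : ℂ) * (ξ₁ * η₁).trace + (m₁ : ℂ) * (ξ₂ * η₂).trace := by
  have h₁ : (P₁ * η₁).trace = 0 := hη₁ ▸ trace_mul_commutator P₁ Ω₁'
  have h₂ : (P₂ * η₂).trace = 0 := hη₂ ▸ trace_mul_commutator P₂ Ω₂'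
  simp only [add_mul, mul_add, ← mul_kronecker_mul, trace_add, trace_kronecker, hP₁i, hP₂i,
    hP₁tr, hP₂tr, h₁, h₂]
  ring
end

section
/- Let P ∈ ℂ^{n×n} be a Hermitian projector (P† = P, P² = P), let B ∈ ℂ^{n×n} be Hermitian, let X ∈ ℂ^{n×n} be arbitrary, and set ξ := [P,[P,X]]. Then [P, [P, [ξ, [P,B]]]] = 0. -/
open Matrix

/-!
Relative to the splitting `range P ⊕ ker P`, a commutator `[P, Y]` is block off-diagonal, that is,
a solution `E` of `P * E + E * P = E`. A product of two block off-diagonal matrices is block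
diagonal, so it commutes with `P`. Both `ξ = [P, [P, X]]` and `[P, B]` are off-diagonal, hence
`[ξ, [P, B]]` commutes with `P` and already the inner commutator with `P` vanishes.
-/

/-- A commutator with an idempotent `P` is block off-diagonal with respect to `P`. -/
lemma commutator_offDiag {R : Type*} [Ring R] {P : R} (hP : P * P = P) (Y : R) :
    P * (P * Y - Y * P) + (P * Y - Y * P) * P = P * Y - Y * P := by
  have h : Y * P * P = Y * P := by rw [mul_assoc, hP]
  rw [mul_sub, sub_mul, ← mul_assoc, ← mul_assoc, hP, h]
  abel

/-- The product of two block off-diagonal elements is block diagonal. -/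
lemma mul_comm_of_offDiag {R : Type*} [Ring R] {P E F : R}
    (hE : P * E + E * P = E) (hF : P * F + F * P = F) : P * (E * F) = E * F * P := by
  have h1 : P * E = E - E * P := eq_sub_of_add_eq hE
  have h2 : F * P = F - P * F := eq_sub_of_add_eq' hF
  rw [← mul_assoc, h1, mul_assoc E F P, h2, sub_mul, mul_sub, mul_assoc]

theorem stmt_16 {n : ℕ} (P B X : Matrix (Fin n) (Fin n) ℂ)
    (hPh : Pᴴ = P) (hPi : P * P = P) (hBh : Bᴴ = B)
    (ξ : Matrix (Fin n) (Fin n) ℂ)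
    (hξ : ξ = P * (P * X - X * P) - (P * X - X * P) * P) :
    P * (P * (ξ * (P * B - B * P) - (P * B - B * P) * ξ)
          - (ξ * (P * B - B * P) - (P * B - B * P) * ξ) * P)
      - (P * (ξ * (P * B - B * P) - (P * B - B * P) * ξ)
          - (ξ * (P * B - B * P) - (P * B - B * P) * ξ) * P) * P = 0 := by
  have h1 := commutator_offDiag hPi B
  have h2 := commutator_offDiag hPi (P * X - X * P)
  rw [← hξ] at h2
  generalize P * B - B * P = A at h1 ⊢
  have h : P * (ξ * A - A * ξ) - (ξ * A - A * ξ) * P = 0 := by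
    rw [mul_sub, sub_mul, mul_comm_of_offDiag h2 h1, mul_comm_of_offDiag h1 h2, sub_self]
  rw [h, mul_zero, zero_mul, sub_zero]
end

section
/- Let λ₁, λ₂, λ₃, λ₄ ∈ ℝ with λ₂ > λ₃ > λ₄ > λ₁, and let A be the diagonal matrix indexed by pairs (i,j), i,j ∈ {1,2}, with entries A_{(1,1),(1,1)} = λ₁, A_{(1,2),(1,2)} = λ₂, A_{(2,1),(2,1)} = λ₃, A_{(2,2),(2,2)} = λ₄. Set P₁* := diag(1,0) and P₂* := diag(0,1) in ℂ^{2×2}. Then tr(A(P₁*⊗P₂*)) = λ₂, and for every pair of Hermitian projectors P₁, P₂ ∈ ℂ^{2×2} with tr P₁ = tr P₂ = 1 one has Re tr( A · (P₁ ⊗ P₂) ) ≤ λ₂; that is, (P₁*, P₂*) is a global maximizer of the generalized Rayleigh-quotient ρ_A(P₁,P₂) = tr(A(P₁⊗P₂)) on Gr_{1,2} × Gr_{1,2}, with maximal value λ₂. -/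
/-!
The matrix `A` is diagonal, so `tr (A (P₁ ⊗ P₂))` only sees the diagonals of `P₁` and `P₂`. The
diagonal of a rank-one projector of `ℂ²` is a probability vector `(a, 1 - a)`, hence the value is
the weighted mean of `Λ₁, Λ₂, Λ₃, Λ₄` with weights `ab, a(1-b), (1-a)b, (1-a)(1-b)`, and is therefore
at most `max Λᵢ = Λ₂`.
-/

open Matrix Kronecker

open scoped ComplexOrder in
/-- The diagonal of a rank-one projector of `ℂ²` is a probability vector: its entries are
nonnegative because `P = Pᴴ * P` is positive semidefinite, and they sum to the trace. -/
lemma exists_diag_of_projector (P : Matrix (Fin 2) (Fin 2) ℂ) (hH : Pᴴ = P) (hI : P * P = P)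
    (hT : P.trace = 1) :
    ∃ a : ℝ, 0 ≤ a ∧ a ≤ 1 ∧ P 0 0 = (a : ℂ) ∧ P 1 1 = ((1 - a : ℝ) : ℂ) := by
  have hP : P.PosSemidef := by
    have h := Matrix.posSemidef_conjTranspose_mul_self P
    rwa [hH, hI] at h
  have h0 := Complex.nonneg_iff.mp (hP.diag_nonneg (i := 0))
  have h1 := Complex.nonneg_iff.mp (hP.diag_nonneg (i := 1))
  rw [Matrix.trace_fin_two] at hT
  have hr := congrArg Complex.re hT
  simp only [Complex.add_re, Complex.one_re] at hr
  refine ⟨(P 0 0).re, h0.1, by linarith, Complex.ext ?_ ?_, Complex.ext ?_ ?_⟩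
  · simp
  · simpa using h0.2.symm
  · rw [Complex.ofReal_re]; linarith
  · simpa using h1.2.symm

theorem stmt_18 (Λ₁ Λ₂ Λ₃ Λ₄ : ℝ) (h23 : Λ₂ > Λ₃) (h34 : Λ₃ > Λ₄) (h41 : Λ₄ > Λ₁)
    (A : Matrix (Fin 2 × Fin 2) (Fin 2 × Fin 2) ℂ)
    (hA : A = Matrix.diagonal (fun p : Fin 2 × Fin 2 =>
      (![![(Λ₁ : ℂ), (Λ₂ : ℂ)], ![(Λ₃ : ℂ), (Λ₄ : ℂ)]] p.1 p.2)))
    (P₁s P₂s : Matrix (Fin 2) (Fin 2) ℂ)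
    (hP₁s : P₁s = Matrix.diagonal ![1, 0])
    (hP₂s : P₂s = Matrix.diagonal ![0, 1]) :
    (A * (P₁s ⊗ₖ P₂s)).trace = (Λ₂ : ℂ) ∧
    ∀ P₁ P₂ : Matrix (Fin 2) (Fin 2) ℂ,
      P₁ᴴ = P₁ → P₁ * P₁ = P₁ → P₁.trace = 1 →
      P₂ᴴ = P₂ → P₂ * P₂ = P₂ → P₂.trace = 1 →
      ((A * (P₁ ⊗ₖ P₂)).trace).re ≤ Λ₂ := by
  have key : ∀ P Q : Matrix (Fin 2) (Fin 2) ℂ, (A * (P ⊗ₖ Q)).trace =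
      Λ₁ * (P 0 0 * Q 0 0) + Λ₂ * (P 0 0 * Q 1 1) + Λ₃ * (P 1 1 * Q 0 0)
        + Λ₄ * (P 1 1 * Q 1 1) := by
    intro P Q
    simp [hA, Matrix.trace, Matrix.diagonal_mul, Fintype.sum_prod_type, Fin.sum_univ_two,
      Matrix.kroneckerMap_apply]
    ring
  refine ⟨by rw [key]; simp [hP₁s, hP₂s], ?_⟩
  intro P₁ P₂ hH₁ hI₁ hT₁ hH₂ hI₂ hT₂
  obtain ⟨a, ha0, ha1, h00, h11⟩ := exists_diag_of_projector P₁ hH₁ hI₁ hT₁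
  obtain ⟨b, hb0, hb1, k00, k11⟩ := exists_diag_of_projector P₂ hH₂ hI₂ hT₂
  have hre : ((A * (P₁ ⊗ₖ P₂)).trace).re =
      Λ₁ * (a * b) + Λ₂ * (a * (1 - b)) + Λ₃ * ((1 - a) * b) + Λ₄ * ((1 - a) * (1 - b)) := by
    rw [key, h00, h11, k00, k11]
    norm_cast
  rw [hre]
  have e1 := mul_nonneg (mul_nonneg ha0 hb0) (show 0 ≤ Λ₂ - Λ₁ by linarith)
  have e3 := mul_nonneg (mul_nonneg (sub_nonneg.2 ha1) hb0) (show 0 ≤ Λ₂ - Λ₃ by linarith)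
  have e4 := mul_nonneg (mul_nonneg (sub_nonneg.2 ha1) (sub_nonneg.2 hb1))
    (show 0 ≤ Λ₂ - Λ₄ by linarith)
  -- The weights sum to `1`, so `Λ₂` minus the mean is exactly the sum of these three products.
  linarith
end

section
/- Let P₁ ∈ ℂ^{n₁×n₁} and P₂ ∈ ℂ^{n₂×n₂} be nonzero Hermitian projectors (Pⱼ† = Pⱼ, Pⱼ² = Pⱼ, Pⱼ ≠ 0), let X₁ ∈ ℂ^{n₁×n₁}, X₂ ∈ ℂ^{n₂×n₂} be Hermitian, and set ξⱼ := [Pⱼ,[Pⱼ,Xⱼ]] for j = 1,2. If ξ₁ ⊗ P₂ + P₁ ⊗ ξ₂ = 0, then ξ₁ = 0 and ξ₂ = 0. -/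
open Matrix Kronecker

/-!
A tangent vector `ξ = [P, [P, X]]` at a projector `P` is off-diagonal with respect to `P`, i.e.
`P ξ P = 0`. Compressing `ξ₁ ⊗ P₂ + P₁ ⊗ ξ₂ = 0` by `P₁ ⊗ 1` on both sides therefore kills the
first summand and leaves `P₁ ⊗ ξ₂ = 0`. A Kronecker product over a field vanishes only if one of
its factors does, so `ξ₂ = 0`, and then `ξ₁ ⊗ P₂ = 0` gives `ξ₁ = 0`.
-/

theorem proj_mul_doubleComm_mul_proj {R : Type*} [Ring R] {P : R} (hP : P * P = P) (X : R) :
    P * (P * (P * X - X * P) - (P * X - X * P) * P) * P = 0 := by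
  have hP' : ∀ Y : R, P * (P * Y) = P * Y := fun Y => by rw [← mul_assoc, hP]
  simp [mul_sub, sub_mul, mul_assoc, hP, hP']

theorem eq_zero_or_eq_zero_of_kronecker_eq_zero {l m n p R : Type*} [MulZeroClass R]
    [NoZeroDivisors R] {A : Matrix l m R} {B : Matrix n p R} (h : A ⊗ₖ B = 0) :
    A = 0 ∨ B = 0 := by
  by_contra! hne
  obtain ⟨hA, hB⟩ := hne
  refine hA (Matrix.ext fun i j => ?_)
  by_contra hij
  refine hB (Matrix.ext fun k q => ?_)
  have hentry : A i j * B k q = 0 := congrFun (congrFun h (i, k)) (j, q)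
  exact (mul_eq_zero.mp hentry).resolve_left hij

theorem stmt_19 {n₁ n₂ : ℕ}
    (P₁ : Matrix (Fin n₁) (Fin n₁) ℂ) (hP₁h : P₁ᴴ = P₁) (hP₁i : P₁ * P₁ = P₁) (hP₁0 : P₁ ≠ 0)
    (P₂ : Matrix (Fin n₂) (Fin n₂) ℂ) (hP₂h : P₂ᴴ = P₂) (hP₂i : P₂ * P₂ = P₂) (hP₂0 : P₂ ≠ 0)
    (X₁ : Matrix (Fin n₁) (Fin n₁) ℂ) (hX₁ : X₁ᴴ = X₁)
    (X₂ : Matrix (Fin n₂) (Fin n₂) ℂ) (hX₂ : X₂ᴴ = X₂)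
    (ξ₁ : Matrix (Fin n₁) (Fin n₁) ℂ)
    (hξ₁ : ξ₁ = P₁ * (P₁ * X₁ - X₁ * P₁) - (P₁ * X₁ - X₁ * P₁) * P₁)
    (ξ₂ : Matrix (Fin n₂) (Fin n₂) ℂ)
    (hξ₂ : ξ₂ = P₂ * (P₂ * X₂ - X₂ * P₂) - (P₂ * X₂ - X₂ * P₂) * P₂)
    (h : ξ₁ ⊗ₖ P₂ + P₁ ⊗ₖ ξ₂ = 0) :
    ξ₁ = 0 ∧ ξ₂ = 0 := by
  have hcompr : P₁ * ξ₁ * P₁ = 0 := by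
    rw [hξ₁]
    exact proj_mul_doubleComm_mul_proj hP₁i X₁
  have hP₁ξ₂ : P₁ ⊗ₖ ξ₂ = 0 := by
    have h' := congrArg (fun M => (P₁ ⊗ₖ (1 : Matrix (Fin n₂) (Fin n₂) ℂ)) * M *
      (P₁ ⊗ₖ (1 : Matrix (Fin n₂) (Fin n₂) ℂ))) h
    simpa [Matrix.mul_add, Matrix.add_mul, ← Matrix.mul_kronecker_mul, hcompr, hP₁i] using h'
  have hξ₂0 : ξ₂ = 0 := (eq_zero_or_eq_zero_of_kronecker_eq_zero hP₁ξ₂).resolve_left hP₁0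
  have hξ₁P₂ : ξ₁ ⊗ₖ P₂ = 0 := by simpa [hP₁ξ₂] using h
  exact ⟨(eq_zero_or_eq_zero_of_kronecker_eq_zero hξ₁P₂).resolve_right hP₂0, hξ₂0⟩
end
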